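/- arXiv:math/0307216 — 11 statements merged into one kernel-verified Lean document; each statement's English description precedes it below -/
import Mathlib

section
/- Let α:(a,b)→ℝ^{2,1} be a smooth normalized isotropic curve. Set k(t) = −½⟨α‴(t),α‴(t)⟩, A₁ = α′, A₂ = α″, A₃ = α‴ − k α′. Then for all t ∈ (a,b): ⟨A₁,A₁⟩ = ⟨A₃,A₃⟩ = ⟨A₁,A₂⟩ = ⟨A₂,A₃⟩ = 0, ⟨A₂,A₂⟩ = 1, ⟨A₁,A₃⟩ = −1, and the Frenet equations hold: A₁′ = A₂, A₂′ = k A₁ + A₃, A₃′ = k A₂. -/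
/-!
Write `D, E, F, G` for the first four derivatives of `α` at a point. Differentiating
`⟨D,D⟩ = 0` gives `⟨D,E⟩ = 0`; differentiating again with `⟨E,E⟩ = 1` gives `⟨D,F⟩ = -1` and
`⟨E,F⟩ = 0`, hence `⟨D,G⟩ = 0` and `⟨E,G⟩ = -⟨F,F⟩`. The orthonormality relations are linear
algebra from these. Since `k′ = -⟨F,G⟩`, the last Frenet equation amounts to
`G + ⟨F,G⟩ D + ⟨F,F⟩ E = 0`. The left side is orthogonal to `D`, `E` and `F`, which form a basis
because their Gram determinant is `-1`, so it vanishes (`eq_zero_of_lprod_eq_zero`).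
-/

open Set

noncomputable section

/-- The Lorentzian inner product on `ℝ^{2,1}`:
`⟨v,w⟩ = −(v¹w³ + v³w¹) + v²w²` (components are 0-indexed). -/
def lprod (v w : Fin 3 → ℝ) : ℝ := -(v 0 * w 2 + v 2 * w 0) + v 1 * w 1

/-- A vector is future-directed if `⟨v, e₁ + e₃⟩ < 0`. -/
def futDir (v : Fin 3 → ℝ) : Prop := lprod v ![1, 0, 1] < 0

/-- The Gram matrix of the Lorentzian inner product. -/
def gram : Matrix (Fin 3) (Fin 3) ℝ := !![0, 0, -1; 0, 1, 0; -1, 0, 0]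

/-- The cross product on `ℝ^{2,1}`, determined by `⟨v × w, u⟩ = det (v, w, u)`. -/
def lcross (v w : Fin 3 → ℝ) : Fin 3 → ℝ :=
  ![-(v 0 * w 1 - v 1 * w 0), v 2 * w 0 - v 0 * w 2, -(v 1 * w 2 - v 2 * w 1)]

/-- The curvature of a normalized isotropic curve: `k(t) = −½⟨α‴(t),α‴(t)⟩`. -/
def curv (α : ℝ → Fin 3 → ℝ) (t : ℝ) : ℝ :=
  -(1 / 2) * lprod (deriv (deriv (deriv α)) t) (deriv (deriv (deriv α)) t)

/-- `A₁ = α′`. -/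
def frA1 (α : ℝ → Fin 3 → ℝ) : ℝ → Fin 3 → ℝ := deriv α

/-- `A₂ = α″`. -/
def frA2 (α : ℝ → Fin 3 → ℝ) : ℝ → Fin 3 → ℝ := deriv (deriv α)

/-- `A₃ = α‴ − k α′`. -/
def frA3 (α : ℝ → Fin 3 → ℝ) (t : ℝ) : Fin 3 → ℝ :=
  deriv (deriv (deriv α)) t - curv α t • deriv α t

/-- Leibniz rule for the Lorentzian product. -/
theorem hasDerivAt_lprod {f g : ℝ → Fin 3 → ℝ} {f' g' : Fin 3 → ℝ} {t : ℝ}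
    (hf : HasDerivAt f f' t) (hg : HasDerivAt g g' t) :
    HasDerivAt (fun s => lprod (f s) (g s)) (lprod f' (g t) + lprod (f t) g') t := by
  have hf' := hasDerivAt_pi.1 hf
  have hg' := hasDerivAt_pi.1 hg
  have h := ((((hf' 0).mul (hg' 2)).add ((hf' 2).mul (hg' 0))).neg).add ((hf' 1).mul (hg' 1))
  refine h.congr_deriv ?_
  simp only [lprod]
  ring

theorem lprod_comm (v w : Fin 3 → ℝ) : lprod v w = lprod w v := by
  simp only [lprod]
  ring

/-- The product rule applied to a product that is constant on an interval. -/
theorem lprod_deriv_eq_zero {a b c : ℝ} {f g : ℝ → Fin 3 → ℝ} {f' g' : Fin 3 → ℝ} {t : ℝ}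
    (ht : t ∈ Ioo a b) (hc : ∀ s ∈ Ioo a b, lprod (f s) (g s) = c)
    (hf : HasDerivAt f f' t) (hg : HasDerivAt g g' t) :
    lprod f' (g t) + lprod (f t) g' = 0 := by
  have hev : (fun s => lprod (f s) (g s)) =ᶠ[nhds t] fun _ => c := by
    filter_upwards [isOpen_Ioo.mem_nhds ht] with s hs using hc s hs
  exact (hasDerivAt_lprod hf hg).unique ((hasDerivAt_const t c).congr_of_eventuallyEq hev)

/-- A vector orthogonal to `D`, `E`, `F` vanishes when these have the Gram matrix of
`α′`, `α″`, `α‴`: that matrix has determinant `-1`, so the three vectors form a basis. -/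
theorem eq_zero_of_lprod_eq_zero {D E F w : Fin 3 → ℝ}
    (hDD : lprod D D = 0) (hDE : lprod D E = 0) (hEE : lprod E E = 1)
    (hDF : lprod D F = -1) (hEF : lprod E F = 0)
    (hwD : lprod w D = 0) (hwE : lprod w E = 0) (hwF : lprod w F = 0) : w = 0 := by
  -- `d` is the determinant of the matrix with rows `D`, `E`, `F`.
  obtain ⟨d, hd⟩ : ∃ d, d = D 0 * (E 1 * F 2 - E 2 * F 1) - D 1 * (E 0 * F 2 - E 2 * F 0)
      + D 2 * (E 0 * F 1 - E 1 * F 0) := ⟨_, rfl⟩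
  -- The determinant of the Gram matrix is `-d ^ 2`.
  have hgram : -d ^ 2 = lprod D D * (lprod E E * lprod F F - lprod E F ^ 2)
      - lprod D E * (lprod D E * lprod F F - lprod E F * lprod D F)
      + lprod D F * (lprod D E * lprod E F - lprod E E * lprod D F) := by
    rw [hd]
    simp only [lprod]
    ring
  have hd0 : d ≠ 0 := by
    rintro rfl
    rw [hDD, hDE, hEE, hDF, hEF] at hgram
    norm_num at hgram
  -- Cramer's rule for the coordinates of `w`.
  have h0 : d * w 0 = -(lprod w D * (E 0 * F 1 - E 1 * F 0)
      - lprod w E * (D 0 * F 1 - D 1 * F 0) + lprod w F * (D 0 * E 1 - D 1 * E 0)) := by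
    rw [hd]
    simp only [lprod]
    ring
  have h1 : d * w 1 = -(lprod w D * (E 0 * F 2 - E 2 * F 0)
      - lprod w E * (D 0 * F 2 - D 2 * F 0) + lprod w F * (D 0 * E 2 - D 2 * E 0)) := by
    rw [hd]
    simp only [lprod]
    ring
  have h2 : d * w 2 = -(lprod w D * (E 1 * F 2 - E 2 * F 1)
      - lprod w E * (D 1 * F 2 - D 2 * F 1) + lprod w F * (D 1 * E 2 - D 2 * E 1)) := by
    rw [hd]
    simp only [lprod]
    ring
  rw [hwD, hwE, hwF] at h0 h1 h2
  have key : ∀ i, d * w i = 0 → w i = 0 := fun i h => (mul_eq_zero.1 h).resolve_left hd0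
  funext i
  fin_cases i
  · exact key 0 (by rw [h0]; ring)
  · exact key 1 (by rw [h1]; ring)
  · exact key 2 (by rw [h2]; ring)

/-- For a smooth normalized isotropic curve `α : (a,b) → ℝ^{2,1}`, the frame
`A₁ = α′`, `A₂ = α″`, `A₃ = α‴ − kα′` (with `k = −½⟨α‴,α‴⟩`) satisfies the Lorentzian
orthonormality relations and the Frenet equations `A₁′ = A₂`, `A₂′ = kA₁ + A₃`, `A₃′ = kA₂`. -/
theorem frenet_of_normalized_isotropic (a b : ℝ) (α : ℝ → Fin 3 → ℝ)
    (hα : ContDiffOn ℝ (⊤ : ℕ∞) α (Ioo a b))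
    (hnull : ∀ t ∈ Ioo a b, lprod (deriv α t) (deriv α t) = 0)
    (hfut : ∀ t ∈ Ioo a b, futDir (deriv α t))
    (hnorm : ∀ t ∈ Ioo a b, lprod (deriv (deriv α) t) (deriv (deriv α) t) = 1) :
    ∀ t ∈ Ioo a b,
      lprod (frA1 α t) (frA1 α t) = 0 ∧
      lprod (frA3 α t) (frA3 α t) = 0 ∧
      lprod (frA1 α t) (frA2 α t) = 0 ∧
      lprod (frA2 α t) (frA3 α t) = 0 ∧
      lprod (frA2 α t) (frA2 α t) = 1 ∧
      lprod (frA1 α t) (frA3 α t) = -1 ∧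
      deriv (frA1 α) t = frA2 α t ∧
      deriv (frA2 α) t = curv α t • frA1 α t + frA3 α t ∧
      deriv (frA3 α) t = curv α t • frA2 α t := by
  have smooth_deriv : ∀ f : ℝ → Fin 3 → ℝ, ContDiffOn ℝ (⊤ : ℕ∞) f (Ioo a b) →
      ContDiffOn ℝ (⊤ : ℕ∞) (deriv f) (Ioo a b) := fun f hf =>
    ((contDiffOn_infty_iff_deriv_of_isOpen isOpen_Ioo).1 hf).2
  have hasDeriv : ∀ f : ℝ → Fin 3 → ℝ, ContDiffOn ℝ (⊤ : ℕ∞) f (Ioo a b) →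
      ∀ t ∈ Ioo a b, HasDerivAt f (deriv f t) t := fun f hf t ht =>
    ((((contDiffOn_infty_iff_deriv_of_isOpen isOpen_Ioo).1 hf).1).differentiableAt
      (isOpen_Ioo.mem_nhds ht)).hasDerivAt
  have s1 := smooth_deriv _ hα
  have s2 := smooth_deriv _ s1
  have s3 := smooth_deriv _ s2
  have d1 := hasDeriv _ s1
  have d2 := hasDeriv _ s2
  have d3 := hasDeriv _ s3
  have hDE : ∀ t ∈ Ioo a b, lprod (deriv α t) (deriv (deriv α) t) = 0 := fun t ht => by
    have h := lprod_deriv_eq_zero ht hnull (d1 t ht) (d1 t ht)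
    rw [lprod_comm (deriv (deriv α) t)] at h
    linarith
  have hDF : ∀ t ∈ Ioo a b, lprod (deriv α t) (deriv (deriv (deriv α)) t) = -1 :=
    fun t ht => by
      have h := lprod_deriv_eq_zero ht hDE (d1 t ht) (d2 t ht)
      rw [hnorm t ht] at h
      linarith
  have hEF : ∀ t ∈ Ioo a b,
      lprod (deriv (deriv α) t) (deriv (deriv (deriv α)) t) = 0 := fun t ht => by
    have h := lprod_deriv_eq_zero ht hnorm (d2 t ht) (d2 t ht)
    rw [lprod_comm (deriv (deriv (deriv α)) t)] at h
    linarith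
  intro t ht
  have hDG := lprod_deriv_eq_zero ht hDF (d1 t ht) (d3 t ht)
  have hEG := lprod_deriv_eq_zero ht hEF (d2 t ht) (d3 t ht)
  have hk := (hasDerivAt_lprod (d3 t ht) (d3 t ht)).const_mul (-(1 / 2))
  have hA3 := (d3 t ht).sub (hk.smul (d1 t ht))
  have hDD' := hnull t ht
  have hEE' := hnorm t ht
  have hDE' := hDE t ht
  have hDF' := hDF t ht
  have hEF' := hEF t ht
  rw [hEF', zero_add] at hDG
  have hA3' : deriv (frA3 α) t = _ := hA3.deriv
  simp only [frA1, frA2, curv, hA3']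
  simp only [frA3, curv]
  generalize deriv (deriv (deriv (deriv α))) t = G at *
  generalize deriv (deriv (deriv α)) t = F at *
  generalize deriv (deriv α) t = E at *
  generalize deriv α t = D at *
  -- The fourth derivative is `G = k′D + 2kE`.
  have hG : G + lprod F G • D + lprod F F • E = 0 := by
    have expand : ∀ v, lprod (G + lprod F G • D + lprod F F • E) v
        = lprod v G + lprod F G * lprod D v + lprod F F * lprod E v := fun v => by
      simp only [lprod, Pi.add_apply, Pi.smul_apply, smul_eq_mul]
      ring
    refine eq_zero_of_lprod_eq_zero hDD' hDE' hEE' hDF' hEF' ?_ ?_ ?_ <;> rw [expand]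
    · rw [hDG, hDD', lprod_comm E D, hDE']
      ring
    · rw [hDE', hEE']
      linarith
    · rw [hDF', hEF']
      ring
  have sub_right : ∀ u v w c, lprod u (v - c • w) = lprod u v - c * lprod u w :=
    fun u v w c => by
      simp only [lprod, Pi.sub_apply, Pi.smul_apply, smul_eq_mul]
      ring
  have sub_left : ∀ u v w c, lprod (v - c • w) u = lprod v u - c * lprod w u :=
    fun u v w c => by
      simp only [lprod, Pi.sub_apply, Pi.smul_apply, smul_eq_mul]
      ring
  refine ⟨hDD', ?_, hDE', ?_, hEE', ?_, trivial, ?_, ?_⟩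
  · rw [sub_right, sub_left, sub_left, lprod_comm F D, hDF', hDD']
    ring
  · rw [sub_right, hEF', lprod_comm E D, hDE']
    ring
  · rw [sub_right, hDF', hDD']
    ring
  · abel
  · rw [lprod_comm G F]
    refine sub_eq_zero.1 (Eq.trans ?_ hG)
    module
end
end

section
/- Let k:(a,b)→ℝ be smooth and let α, A₁, A₂, A₃ : (a,b)→ℝ^{2,1} be smooth maps satisfying, for all t: ⟨Aᵢ(t),Aⱼ(t)⟩ = gᵢⱼ for i,j ∈ {1,2,3}, A₁(t) future-directed, α′ = A₁, A₁′ = A₂, A₂′ = k A₁ + A₃, and A₃′ = k A₂. Then α is a normalized isotropic curve, its curvature equals k (i.e. k(t) = −½⟨α‴(t),α‴(t)⟩ for all t), and A₁ = α′, A₂ = α″, A₃ = α‴ − k α′. -/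
/-!
Since the Frenet equations hold on an open interval, differentiating `α' = A₁` twice gives
`α'' = A₂` and `α''' = k A₁ + A₃` there. All the claims are then read off from the Gram matrix of
the frame; in particular `⟨α''', α'''⟩ = 2 k ⟨A₁, A₃⟩ = -2 k`, because `A₁` and `A₃` are isotropic.
-/

open Set

noncomputable section

/-- If `(α, A₁, A₂, A₃)` is a smooth solution of the Frenet system with a
Lorentz-orthonormal, future-directed frame, then `α` is a normalized isotropic curve with
curvature `k`, and `(A₁, A₂, A₃)` is its Frenet frame. -/
theorem isotropic_of_frenet (a b : ℝ) (k : ℝ → ℝ) (α A₁ A₂ A₃ : ℝ → Fin 3 → ℝ)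
    (hk : ContDiffOn ℝ (⊤ : ℕ∞) k (Ioo a b))
    (hα : ContDiffOn ℝ (⊤ : ℕ∞) α (Ioo a b))
    (hA₁ : ContDiffOn ℝ (⊤ : ℕ∞) A₁ (Ioo a b))
    (hA₂ : ContDiffOn ℝ (⊤ : ℕ∞) A₂ (Ioo a b))
    (hA₃ : ContDiffOn ℝ (⊤ : ℕ∞) A₃ (Ioo a b))
    (horth : ∀ t ∈ Ioo a b, ∀ i j : Fin 3,
      lprod (![A₁ t, A₂ t, A₃ t] i) (![A₁ t, A₂ t, A₃ t] j) = gram i j)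
    (hfut : ∀ t ∈ Ioo a b, futDir (A₁ t))
    (h0 : ∀ t ∈ Ioo a b, deriv α t = A₁ t)
    (h1 : ∀ t ∈ Ioo a b, deriv A₁ t = A₂ t)
    (h2 : ∀ t ∈ Ioo a b, deriv A₂ t = k t • A₁ t + A₃ t)
    (h3 : ∀ t ∈ Ioo a b, deriv A₃ t = k t • A₂ t) :
    ∀ t ∈ Ioo a b,
      lprod (deriv α t) (deriv α t) = 0 ∧
      futDir (deriv α t) ∧
      lprod (deriv (deriv α) t) (deriv (deriv α) t) = 1 ∧
      k t = -(1 / 2) * lprod (deriv (deriv (deriv α)) t) (deriv (deriv (deriv α)) t) ∧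
      A₁ t = deriv α t ∧
      A₂ t = deriv (deriv α) t ∧
      A₃ t = deriv (deriv (deriv α)) t - k t • deriv α t := by
  intro t ht
  -- The Frenet equations hold on a neighbourhood of each point, so they can be differentiated.
  have e1 : ∀ s ∈ Ioo a b, deriv (deriv α) s = A₂ s := fun s hs => by
    have h : deriv α =ᶠ[nhds s] A₁ := Filter.eventually_of_mem (isOpen_Ioo.mem_nhds hs) h0
    rw [h.deriv_eq, h1 s hs]
  have e2 : deriv (deriv (deriv α)) t = k t • A₁ t + A₃ t := by
    have h : deriv (deriv α) =ᶠ[nhds t] A₂ :=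
      Filter.eventually_of_mem (isOpen_Ioo.mem_nhds ht) e1
    rw [h.deriv_eq, h2 t ht]
  have g11 : lprod (A₁ t) (A₁ t) = 0 := by simpa [gram] using horth t ht 0 0
  have g22 : lprod (A₂ t) (A₂ t) = 1 := by simpa [gram] using horth t ht 1 1
  have g13 : lprod (A₁ t) (A₃ t) = -1 := by simpa [gram] using horth t ht 0 2
  have g33 : lprod (A₃ t) (A₃ t) = 0 := by simpa [gram] using horth t ht 2 2
  rw [e2, e1 t ht, h0 t ht]
  refine ⟨g11, hfut t ht, g22, ?_, rfl, rfl, by simp⟩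
  -- `⟨k A₁ + A₃, k A₁ + A₃⟩ = k² ⟨A₁, A₁⟩ + 2 k ⟨A₁, A₃⟩ + ⟨A₃, A₃⟩ = -2 k`
  simp only [lprod, Pi.add_apply, Pi.smul_apply, smul_eq_mul] at g11 g13 g33 ⊢
  linear_combination (1 / 2) * k t ^ 2 * g11 + k t * g13 + (1 / 2) * g33
end
end

section
/- Coadjoint orbits of positive type are exactly the joint level sets of the Casimirs: if (p₀,v₀), (p,v) ∈ ℝ³⊕ℝ³ satisfy ⟨p₀,p₀⟩ = ⟨p,p⟩ > 0 and ⟨p₀,v₀⟩ = ⟨p,v⟩, then there exists (q,A) ∈ E(2,1) such that Ap₀ = p and Av₀ − (Ap₀)×q = v. -/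
/-!
Identify `v` with the symmetric matrix `[[v 0, v 1 / √2], [v 1 / √2, v 2]]`, whose determinant is
`-⟨v,v⟩/2`. The congruence action `X ↦ g X gᵀ` of `SL(2,ℝ)` then becomes a homomorphism
`SL(2,ℝ) → SO⁺(2,1)` (`spinMat`, `spinMat_isLorentz`, `spinMat_mul`). Every vector of square
length `m² > 0` is the image of `(0, m, 0)` under this action, since an indefinite binary
quadratic form splits into two linear factors (`exists_spin`); hence some Lorentz matrix `A`
carries `p₀` to `p`.

The translation only has to solve `p × q = w` for `w = A v₀ - v`. Since `A` preserves the inner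
product, `⟨p,w⟩ = 0`, and the identity `p × (p × w) = ⟨p,p⟩ w - ⟨p,w⟩ p` shows that
`q = (p × w) / ⟨p,p⟩` works.
-/

open Set

noncomputable section

/-- Membership in the restricted Lorentz group `SO⁺(2,1)` (the matrix part of `E(2,1)`). -/
def isLorentz (A : Matrix (Fin 3) (Fin 3) ℝ) : Prop :=
  A.det = 1 ∧ (∀ i j, lprod (fun r => A r i) (fun r => A r j) = gram i j) ∧
    futDir (fun r => A r 0) ∧ futDir (fun r => A r 2)

/-- The image in `SO⁺(2,1)` of the matrix `[[a, b], [c, d]]` (of determinant one), acting by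
congruence on symmetric `2 × 2` matrices. -/
def spinMat (a b c d : ℝ) : Matrix (Fin 3) (Fin 3) ℝ :=
  !![a ^ 2, √2 * (a * b), b ^ 2;
     √2 * (a * c), a * d + b * c, √2 * (b * d);
     c ^ 2, √2 * (c * d), d ^ 2]

lemma sqrt_two_sq : √2 ^ 2 = 2 := Real.sq_sqrt (by norm_num)

lemma spinMat_isLorentz {a b c d : ℝ} (h : a * d - b * c = 1) : isLorentz (spinMat a b c d) := by
  have hs := sqrt_two_sq
  refine ⟨?_, ?_, ?_, ?_⟩
  · have h3 : (a * d - b * c) ^ 3 = 1 := by rw [h]; norm_num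
    simp only [spinMat, Matrix.det_fin_three, Matrix.of_apply, Matrix.cons_val', Matrix.cons_val]
    grind
  · have h2 : (a * d - b * c) ^ 2 = 1 := by rw [h]; norm_num
    intro i j
    fin_cases i <;> fin_cases j <;> simp [spinMat, lprod, gram] <;> grind
  · have : 0 < a ^ 2 + c ^ 2 := by
      by_contra! hn
      have ha : a = 0 := by nlinarith [sq_nonneg a, sq_nonneg c]
      have hc : c = 0 := by nlinarith [sq_nonneg a, sq_nonneg c]
      simp [ha, hc] at h
    simp [futDir, spinMat, lprod]
    linarith
  · have : 0 < b ^ 2 + d ^ 2 := by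
      by_contra! hn
      have hb : b = 0 := by nlinarith [sq_nonneg b, sq_nonneg d]
      have hd : d = 0 := by nlinarith [sq_nonneg b, sq_nonneg d]
      simp [hb, hd] at h
    simp [futDir, spinMat, lprod]
    linarith

lemma spinMat_mul (a b c d a' b' c' d' : ℝ) :
    spinMat a b c d * spinMat a' b' c' d' =
      spinMat (a * a' + b * c') (a * b' + b * d') (c * a' + d * c') (c * b' + d * d') := by
  have hs := sqrt_two_sq
  ext i j
  fin_cases i <;> fin_cases j <;> simp [spinMat, Matrix.mul_apply, Fin.sum_univ_three] <;> grind

/-- `SL(2,ℝ)` moves `(0, m, 0)` to any vector of square length `m²`. -/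
lemma exists_spin (p : Fin 3 → ℝ) {m : ℝ} (hm : 0 < m) (hp : lprod p p = m ^ 2) :
    ∃ a b c d : ℝ, a * d - b * c = 1 ∧ (spinMat a b c d).mulVec ![0, m, 0] = p := by
  have hs := sqrt_two_sq
  have hs0 : √2 ≠ 0 := by positivity
  have hm0 : m ≠ 0 := hm.ne'
  unfold lprod at hp
  suffices H : ∃ a b c d : ℝ, a * d - b * c = 1 ∧ √2 * (a * b) * m = p 0 ∧
      (a * d + b * c) * m = p 1 ∧ √2 * (c * d) * m = p 2 by
    obtain ⟨a, b, c, d, h, h0, h1, h2⟩ := H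
    refine ⟨a, b, c, d, h, ?_⟩
    ext i
    fin_cases i <;> simp [spinMat, Matrix.mulVec, dotProduct, Fin.sum_univ_three, h0, h1, h2]
  by_cases h0 : p 0 = 0
  · -- The form is divisible by one of the variables, and `p 1 = ±m`.
    have h1 : (p 1 - m) * (p 1 + m) = 0 := by rw [h0] at hp; linarith
    rcases mul_eq_zero.mp h1 with h1 | h1
    · refine ⟨1, 0, p 2 / (√2 * m), 1, by ring, by simp [h0], by linarith, ?_⟩
      field_simp
    · refine ⟨0, -1, 1, p 2 / (√2 * m), by ring, by simp [h0], by linarith, ?_⟩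
      field_simp
  · refine ⟨1, p 0 / (√2 * m), (p 1 - m) * √2 / (2 * p 0), (m + p 1) / (2 * m), ?_, ?_, ?_, ?_⟩
    · field_simp
      ring
    · field_simp
    · field_simp
      ring
    · field_simp
      grind

lemma isLorentz.lprod_mulVec {A : Matrix (Fin 3) (Fin 3) ℝ} (hA : isLorentz A)
    (x y : Fin 3 → ℝ) : lprod (A.mulVec x) (A.mulVec y) = lprod x y := by
  have h := hA.2.1
  have h00 := h 0 0
  have h01 := h 0 1
  have h02 := h 0 2
  have h11 := h 1 1
  have h12 := h 1 2
  have h22 := h 2 2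
  simp [lprod, gram] at h00 h01 h02 h11 h12 h22
  simp only [lprod, Matrix.mulVec, dotProduct, Fin.sum_univ_three]
  linear_combination x 0 * y 0 * h00 + (x 0 * y 1 + x 1 * y 0) * h01 +
    (x 0 * y 2 + x 2 * y 0) * h02 + x 1 * y 1 * h11 + (x 1 * y 2 + x 2 * y 1) * h12 +
    x 2 * y 2 * h22

lemma lcross_lcross (p w : Fin 3 → ℝ) :
    lcross p (lcross p w) = lprod p p • w - lprod p w • p := by
  ext i
  fin_cases i <;> simp [lcross, lprod] <;> ring

lemma lcross_smul (p w : Fin 3 → ℝ) (t : ℝ) : lcross p (t • w) = t • lcross p w := by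
  ext i
  fin_cases i <;> simp [lcross] <;> ring

lemma lprod_sub (p x y : Fin 3 → ℝ) : lprod p (x - y) = lprod p x - lprod p y := by
  simp [lprod]
  ring

/-- Coadjoint orbits of positive type are exactly the joint level sets of the
two Casimirs: if `⟨p₀,p₀⟩ = ⟨p,p⟩ > 0` and `⟨p₀,v₀⟩ = ⟨p,v⟩`, then some `(q,A) ∈ E(2,1)`
carries `(p₀,v₀)` to `(p,v)` under the coadjoint action. -/
theorem positive_orbits_are_level_sets (p₀ v₀ p v : Fin 3 → ℝ)
    (hC1 : lprod p₀ p₀ = lprod p p) (hpos : 0 < lprod p p)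
    (hC2 : lprod p₀ v₀ = lprod p v) :
    ∃ (q : Fin 3 → ℝ) (A : Matrix (Fin 3) (Fin 3) ℝ),
      isLorentz A ∧
      A.mulVec p₀ = p ∧
      A.mulVec v₀ - lcross (A.mulVec p₀) q = v := by
  obtain ⟨m, hm, hmp⟩ : ∃ m : ℝ, 0 < m ∧ lprod p p = m ^ 2 :=
    ⟨√(lprod p p), Real.sqrt_pos.mpr hpos, (Real.sq_sqrt hpos.le).symm⟩
  obtain ⟨a, b, c, d, h, hgp⟩ := exists_spin p hm hmp
  obtain ⟨a₀, b₀, c₀, d₀, h₀, hgp₀⟩ := exists_spin p₀ hm (hC1.trans hmp)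
  -- The product `g g₀⁻¹`, where `g` and `g₀` carry `(0, m, 0)` to `p` and `p₀`.
  obtain ⟨A, hA, hAp⟩ : ∃ A, isLorentz A ∧ A.mulVec p₀ = p := by
    refine ⟨spinMat (a * d₀ + b * -c₀) (a * -b₀ + b * a₀) (c * d₀ + d * -c₀)
      (c * -b₀ + d * a₀), spinMat_isLorentz ?_, ?_⟩
    · linear_combination (a₀ * d₀ - b₀ * c₀) * h + h₀
    · rw [← hgp₀, ← hgp, Matrix.mulVec_mulVec, spinMat_mul]
      congr 2 <;> grind
  have hw : lprod p (A.mulVec v₀ - v) = 0 := by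
    have := hA.lprod_mulVec p₀ v₀
    rw [hAp] at this
    rw [lprod_sub, this, hC2, sub_self]
  refine ⟨(lprod p p)⁻¹ • lcross p (A.mulVec v₀ - v), A, hA, hAp, ?_⟩
  rw [hAp, lcross_smul, lcross_lcross, hw, zero_smul, sub_zero, inv_smul_smul₀ hpos.ne',
    sub_sub_cancel]
end
end

section
/- Every element (p,v) ∈ ℝ³⊕ℝ³ with p ≠ 0 is a regular element with abelian isotropy algebra: the set 𝔥 = {(q,B) : q ∈ ℝ³, B a real 3×3 matrix with ⟨Bx,y⟩ + ⟨x,By⟩ = 0 for all x,y ∈ ℝ³, Bp = 0, and Bv = p×q} is a 2-dimensional real linear subspace of ℝ³ ⊕ M₃(ℝ), and it is abelian for the semidirect-product bracket: for all (q₁,B₁), (q₂,B₂) ∈ 𝔥, B₁q₂ − B₂q₁ = 0 and B₁B₂ − B₂B₁ = 0. -/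
/-!
Every Lorentz-skew matrix is `x ↦ w × x` for a unique vector `w` (`skew_eq_crossMat`), and for
`p ≠ 0` the equation `p × w = 0` forces `w` to be a multiple of `p` (`parallel_of_lcross_eq_zero`).
Hence `Bp = 0` means `B = t [p]ₓ`, and then `Bv = p × q` reads `p × (q - t v) = 0`, that is,
`q = s p + t v`. So the isotropy algebra is spanned by `(p, 0)` and `(v, [p]ₓ)`
(`inIsotropy_iff`). These are linearly independent because `p ≠ 0` and `[p]ₓ ≠ 0`, and with this
parametrization both components of the bracket cancel.
-/


open Set

noncomputable section

/-- The isotropy condition at `(p,v)` for an element `(q,B)` of the Lie algebra `𝔢(2,1)`: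
`B` is Lorentz-skew, `Bp = 0` and `Bv = p × q`. -/
def inIsotropy (p v : Fin 3 → ℝ) (q : Fin 3 → ℝ) (B : Matrix (Fin 3) (Fin 3) ℝ) : Prop :=
  (∀ x y : Fin 3 → ℝ, lprod (B.mulVec x) y + lprod x (B.mulVec y) = 0) ∧
  B.mulVec p = 0 ∧
  B.mulVec v = lcross p q

/-- The matrix `[p]ₓ` of the linear map `x ↦ p × x`. -/
def crossMat (p : Fin 3 → ℝ) : Matrix (Fin 3) (Fin 3) ℝ :=
  !![p 1, -p 0, 0; p 2, 0, -p 0; 0, p 2, -p 1]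

lemma crossMat_mulVec (p x : Fin 3 → ℝ) : (crossMat p).mulVec x = lcross p x := by
  ext i
  fin_cases i <;> simp [crossMat, lcross, Matrix.mulVec, dotProduct, Fin.sum_univ_three] <;> ring

lemma lcross_self (p : Fin 3 → ℝ) : lcross p p = 0 := by
  ext i
  fin_cases i <;> simp [lcross] <;> ring

lemma lcross_add_smul (p x y : Fin 3 → ℝ) (s t : ℝ) :
    lcross p (s • x + t • y) = s • lcross p x + t • lcross p y := by
  simp only [← crossMat_mulVec, Matrix.mulVec_add, Matrix.mulVec_smul]

lemma crossMat_ne_zero {p : Fin 3 → ℝ} (hp : p ≠ 0) : crossMat p ≠ 0 := by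
  intro h
  apply hp
  have h0 := congrFun (congrFun h 0) 0
  have h1 := congrFun (congrFun h 0) 1
  have h2 := congrFun (congrFun h 1) 0
  simp [crossMat] at h0 h1 h2
  ext i
  fin_cases i <;> simp [h0, h1, h2]

lemma parallel_of_lcross_eq_zero {p w : Fin 3 → ℝ} (hp : p ≠ 0) (h : lcross p w = 0) :
    ∃ t : ℝ, w = t • p := by
  have h0 := congrFun h 0
  have h1 := congrFun h 1
  have h2 := congrFun h 2
  simp [lcross] at h0 h1 h2
  obtain ⟨i, hi⟩ := Function.ne_iff.mp hp
  refine ⟨w i / p i, ?_⟩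
  ext j
  simp only [Pi.zero_apply] at hi
  simp only [Pi.smul_apply, smul_eq_mul]
  rw [div_mul_eq_mul_div, eq_div_iff hi]
  fin_cases i <;> fin_cases j <;> simp <;> linarith

lemma skew_crossMat (p x y : Fin 3 → ℝ) :
    lprod ((crossMat p).mulVec x) y + lprod x ((crossMat p).mulVec y) = 0 := by
  simp [crossMat_mulVec, lprod, lcross]
  ring

lemma skew_eq_crossMat {B : Matrix (Fin 3) (Fin 3) ℝ}
    (h : ∀ x y : Fin 3 → ℝ, lprod (B.mulVec x) y + lprod x (B.mulVec y) = 0) :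
    ∃ w, B = crossMat w := by
  -- The entries of `w` are read off from the first two columns of `[w]ₓ`.
  refine ⟨![-B 0 1, B 0 0, B 1 0], ?_⟩
  have key : ∀ i j : Fin 3, lprod (B.mulVec (Pi.single i 1)) (Pi.single j 1) +
      lprod (Pi.single i 1) (B.mulVec (Pi.single j 1)) = 0 := fun i j => h _ _
  have h00 := key 0 0
  have h01 := key 0 1
  have h02 := key 0 2
  have h11 := key 1 1
  have h12 := key 1 2
  have h22 := key 2 2
  simp [lprod] at h00 h01 h02 h11 h12 h22
  ext i j
  fin_cases i <;> fin_cases j <;> simp [crossMat] <;> linarith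

/-- Parametrization of the isotropy algebra by the basis `(p, 0)`, `(v, [p]ₓ)`. -/
lemma inIsotropy_iff {p v : Fin 3 → ℝ} (hp : p ≠ 0) (q : Fin 3 → ℝ)
    (B : Matrix (Fin 3) (Fin 3) ℝ) :
    inIsotropy p v q B ↔ ∃ s t : ℝ, q = s • p + t • v ∧ B = t • crossMat p := by
  constructor
  · rintro ⟨hB, hBp, hBv⟩
    obtain ⟨w, rfl⟩ := skew_eq_crossMat hB
    have hw : lcross p w = 0 := by
      rw [crossMat_mulVec] at hBp
      have h0 := congrFun hBp 0
      have h1 := congrFun hBp 1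
      have h2 := congrFun hBp 2
      simp [lcross] at h0 h1 h2
      ext i
      fin_cases i <;> simp [lcross] <;> linarith
    obtain ⟨t, rfl⟩ := parallel_of_lcross_eq_zero hp hw
    have ht : crossMat (t • p) = t • crossMat p := by
      ext i j
      fin_cases i <;> fin_cases j <;> simp [crossMat]
    rw [ht, Matrix.smul_mulVec, crossMat_mulVec] at hBv
    have hq : lcross p (q - t • v) = 0 := by
      have := lcross_add_smul p q v 1 (-t)
      rw [← hBv] at this
      simpa [sub_eq_add_neg] using this
    obtain ⟨s, hs⟩ := parallel_of_lcross_eq_zero hp hq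
    exact ⟨s, t, by rw [← hs]; simp, ht⟩
  · rintro ⟨s, t, rfl, rfl⟩
    refine ⟨fun x y => ?_, ?_, ?_⟩
    · have := skew_crossMat p x y
      simp only [Matrix.smul_mulVec, lprod, Pi.smul_apply, smul_eq_mul] at this ⊢
      linear_combination t * this
    · simp [Matrix.smul_mulVec, crossMat_mulVec, lcross_self]
    · simp [Matrix.smul_mulVec, crossMat_mulVec, lcross_add_smul, lcross_self]

/-- For `(p,v)` with `p ≠ 0`, the isotropy set
`𝔥 = {(q,B) : B Lorentz-skew, Bp = 0, Bv = p×q}` is a 2-dimensional real linear subspace of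
`ℝ³ ⊕ M₃(ℝ)`, and it is abelian for the semidirect-product bracket. -/
theorem isotropy_two_dimensional_abelian (p v : Fin 3 → ℝ) (hp : p ≠ 0) :
    (∃ W : Submodule ℝ ((Fin 3 → ℝ) × Matrix (Fin 3) (Fin 3) ℝ),
      (∀ (q : Fin 3 → ℝ) (B : Matrix (Fin 3) (Fin 3) ℝ),
        (q, B) ∈ W ↔ inIsotropy p v q B) ∧
      Module.finrank ℝ W = 2) ∧
    (∀ (q₁ : Fin 3 → ℝ) (B₁ : Matrix (Fin 3) (Fin 3) ℝ)
       (q₂ : Fin 3 → ℝ) (B₂ : Matrix (Fin 3) (Fin 3) ℝ),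
      inIsotropy p v q₁ B₁ → inIsotropy p v q₂ B₂ →
      B₁.mulVec q₂ - B₂.mulVec q₁ = 0 ∧ B₁ * B₂ - B₂ * B₁ = 0) := by
  refine ⟨⟨Submodule.span ℝ {(p, 0), (v, crossMat p)}, fun q B => ?_, ?_⟩, ?_⟩
  · rw [inIsotropy_iff hp, Submodule.mem_span_pair]
    simp [Prod.ext_iff, eq_comm]
  · have hli : LinearIndependent ℝ
        ![((p, 0) : (Fin 3 → ℝ) × Matrix (Fin 3) (Fin 3) ℝ), (v, crossMat p)] := by
      rw [LinearIndependent.pair_iff]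
      intro s t h
      have h1 := congrArg Prod.fst h
      have h2 := congrArg Prod.snd h
      have ht : t = 0 := by simpa [crossMat_ne_zero hp] using h2
      subst ht
      exact ⟨by simpa [hp] using h1, rfl⟩
    have := finrank_span_eq_card hli
    rwa [Matrix.range_cons_cons_empty, Fintype.card_fin] at this
  · intro q₁ B₁ q₂ B₂ h₁ h₂
    obtain ⟨s₁, t₁, rfl, rfl⟩ := (inIsotropy_iff hp _ _).mp h₁
    obtain ⟨s₂, t₂, rfl, rfl⟩ := (inIsotropy_iff hp _ _).mp h₂
    constructor
    · simp [Matrix.smul_mulVec, crossMat_mulVec, lcross_add_smul, lcross_self, smul_smul,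
        mul_comm]
    · simp [smul_smul, mul_comm]
end
end

section
/- Suppose (k,λ₄,λ₅):(a,b)→ℝ³ is a differentiable solution of the Euler–Lagrange system k′ = −2λ₄/m, λ₄′ = λ₅ + ½k(1−mk), λ₅′ = kλ₄ (with m ≠ 0 a fixed real constant). Define the 4×4 matrix-valued functions H = [[0,0,0,0],[1,0,k,0],[0,1,0,k],[0,0,1,0]] and L = [[0,0,0,0],[½(1+mk), −λ₄, −λ₅, 0],[0, ½(1−mk), 0, −λ₅],[−m, 0, ½(1−mk), λ₄]]. Then the Lax equation L′(t) = L(t)H(t) − H(t)L(t) holds for all t ∈ (a,b). -/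
/-!
The Lax equation is a direct entrywise computation: the commutator `LH - HL` is evaluated as an
explicit matrix, and each of its entries is the derivative of the corresponding entry of `L`
dictated by the Euler–Lagrange system.
-/

open Set

noncomputable section

/-- The matrix `H` (the Hamiltonian/curvature matrix of the Frenet control system). -/
def Hmat (k : ℝ) : Matrix (Fin 4) (Fin 4) ℝ :=
  !![0, 0, 0, 0;
     1, 0, k, 0;
     0, 1, 0, k;
     0, 0, 1, 0]

/-- The Lax matrix `L` of the Poincaré variational problem for isotropic curves. -/
def Lmat (m k l₄ l₅ : ℝ) : Matrix (Fin 4) (Fin 4) ℝ :=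
  !![0, 0, 0, 0;
     (1 + m * k) / 2, -l₄, -l₅, 0;
     0, (1 - m * k) / 2, 0, -l₅;
     -m, 0, (1 - m * k) / 2, l₄]

/-- Along any differentiable solution of the Euler–Lagrange system
`k′ = −2λ₄/m`, `λ₄′ = λ₅ + ½k(1−mk)`, `λ₅′ = kλ₄`, the Lax equation `L′ = LH − HL`
holds (entrywise) on `(a,b)`. -/
theorem lax_equation (a b m : ℝ) (hm : m ≠ 0) (k l₄ l₅ : ℝ → ℝ)
    (hk : ∀ t ∈ Ioo a b, HasDerivAt k (-(2 * l₄ t) / m) t)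
    (hl₄ : ∀ t ∈ Ioo a b, HasDerivAt l₄ (l₅ t + (1 / 2) * k t * (1 - m * k t)) t)
    (hl₅ : ∀ t ∈ Ioo a b, HasDerivAt l₅ (k t * l₄ t) t) :
    ∀ t ∈ Ioo a b, ∀ i j : Fin 4,
      HasDerivAt (fun s => Lmat m (k s) (l₄ s) (l₅ s) i j)
        ((Lmat m (k t) (l₄ t) (l₅ t) * Hmat (k t) -
          Hmat (k t) * Lmat m (k t) (l₄ t) (l₅ t)) i j) t := by
  intro t ht
  have h4 := hl₄ t ht
  have h5 := hl₅ t ht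
  -- The entries built from `k`: multiplying `k′ = -2λ₄/m` by `±m/2` gives `∓λ₄`.
  have hp : HasDerivAt (fun s => (1 + m * k s) / 2) (-l₄ t) t := by
    refine ((((hk t ht).const_mul m).const_add 1).div_const 2).congr_deriv ?_
    field_simp
  have hq : HasDerivAt (fun s => (1 - m * k s) / 2) (l₄ t) t := by
    refine ((((hk t ht).const_mul m).const_sub 1).div_const 2).congr_deriv ?_
    field_simp
  have hc : ∀ c : ℝ, HasDerivAt (fun _ : ℝ => c) 0 t := fun c => hasDerivAt_const t c
  -- The commutator agrees with the entrywise derivative of `L` prescribed by the system.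
  have hcomm : Lmat m (k t) (l₄ t) (l₅ t) * Hmat (k t) -
      Hmat (k t) * Lmat m (k t) (l₄ t) (l₅ t) =
      !![0, 0, 0, 0;
         -l₄ t, -(l₅ t + (1 / 2) * k t * (1 - m * k t)), -(k t * l₄ t), 0;
         0, l₄ t, 0, -(k t * l₄ t);
         0, 0, l₄ t, l₅ t + (1 / 2) * k t * (1 - m * k t)] := by
    ext i j
    fin_cases i <;> fin_cases j <;>
      simp [Lmat, Hmat] <;> ring
  rw [hcomm]
  intro i j
  fin_cases i <;> fin_cases j
  exacts [hc 0, hc 0, hc 0, hc 0,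
    hp, h4.neg, h5.neg, hc 0,
    hc 0, hq, hc 0, h5.neg,
    hc (-m), hc 0, hq, h4]
end
end

section
/- The Casimir functions are conserved along solutions of the Euler–Lagrange system: if (k,λ₄,λ₅):(a,b)→ℝ³ is a differentiable solution of k′ = −2λ₄/m, λ₄′ = λ₅ + ½k(1−mk), λ₅′ = kλ₄, then the functions C₁ = λ₄² − λ₅(1−mk) and C₂ = mλ₅ − ¼(1−m²k²) are constant on (a,b). -/
/-!
Substituting the Euler–Lagrange system into the derivatives of `C₁` and `C₂` gives zero at every
point of `(a, b)`; the factor `m ≠ 0` cancels against the denominator in `k′ = −2λ₄/m`. A function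
with zero derivative on an interval is constant there (`eq_of_hasDerivAt_zero_Ioo`).
-/

open Set

/-- A real function with zero derivative throughout an open interval is constant on it. -/
lemma eq_of_hasDerivAt_zero_Ioo {a b : ℝ} {f : ℝ → ℝ}
    (hf : ∀ t ∈ Ioo a b, HasDerivAt f 0 t) {s t : ℝ}
    (hs : s ∈ Ioo a b) (ht : t ∈ Ioo a b) : f s = f t :=
  isOpen_Ioo.is_const_of_deriv_eq_zero isPreconnected_Ioo
    (fun x hx => (hf x hx).differentiableAt.differentiableWithinAt)
    (fun x hx => (hf x hx).deriv) hs ht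

/-- The Casimir functions `C₁ = λ₄² − λ₅(1−mk)` and
`C₂ = mλ₅ − ¼(1−m²k²)` are constant along any differentiable solution of the Euler–Lagrange
system `k′ = −2λ₄/m`, `λ₄′ = λ₅ + ½k(1−mk)`, `λ₅′ = kλ₄` on `(a,b)`. -/
theorem casimirs_conserved (a b m : ℝ) (hm : m ≠ 0) (k l₄ l₅ : ℝ → ℝ)
    (hk : ∀ t ∈ Ioo a b, HasDerivAt k (-(2 * l₄ t) / m) t)
    (hl₄ : ∀ t ∈ Ioo a b, HasDerivAt l₄ (l₅ t + (1 / 2) * k t * (1 - m * k t)) t)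
    (hl₅ : ∀ t ∈ Ioo a b, HasDerivAt l₅ (k t * l₄ t) t) :
    ∀ s ∈ Ioo a b, ∀ t ∈ Ioo a b,
      (l₄ s) ^ 2 - l₅ s * (1 - m * k s) = (l₄ t) ^ 2 - l₅ t * (1 - m * k t) ∧
      m * l₅ s - (1 / 4) * (1 - m ^ 2 * (k s) ^ 2) =
        m * l₅ t - (1 / 4) * (1 - m ^ 2 * (k t) ^ 2) := by
  intro s hs t ht
  constructor
  · refine eq_of_hasDerivAt_zero_Ioo
      (f := fun x => (l₄ x) ^ 2 - l₅ x * (1 - m * k x)) (fun x hx => ?_) hs ht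
    -- `C₁′ = 2 λ₄ λ₄′ - λ₅′ (1 - m k) + m λ₅ k′`, which cancels along the system.
    refine HasDerivAt.congr_deriv (((hl₄ x hx).fun_pow 2).fun_sub
      ((hl₅ x hx).fun_mul (((hk x hx).const_mul m).const_sub 1))) ?_
    push_cast
    field_simp
    ring
  · refine eq_of_hasDerivAt_zero_Ioo
      (f := fun x => m * l₅ x - (1 / 4) * (1 - m ^ 2 * (k x) ^ 2)) (fun x hx => ?_) hs ht
    -- `C₂′ = m λ₅′ + ½ m² k k′`, which cancels along the system.
    refine HasDerivAt.congr_deriv (((hl₅ x hx).const_mul m).fun_sub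
      (((((hk x hx).fun_pow 2).const_mul (m ^ 2)).const_sub 1).const_mul (1 / 4))) ?_
    push_cast
    field_simp
    ring
end

section
/- If (k,λ₄,λ₅):(a,b)→ℝ³ is a (three times differentiable) solution of the Euler–Lagrange system k′ = −2λ₄/m, λ₄′ = λ₅ + ½k(1−mk), λ₅′ = kλ₄ (with m ≠ 0), then the curvature k satisfies the third-order ordinary differential equation m k‴ − 3mk k′ + k′ = 0 on (a,b). -/
/-!
Differentiating `k′ = −2λ₄/m` twice and substituting the system gives
`m k‴ = −2λ₄″ = −2kλ₄ − k′ + 2mkk′`. Since `−2λ₄ = mk′`, the right-hand side is `3mkk′ − k′`.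
-/

open Set

/-- Along any solution of the Euler–Lagrange system
`k′ = −2λ₄/m`, `λ₄′ = λ₅ + ½k(1−mk)`, `λ₅′ = kλ₄` on `(a,b)` (with `m ≠ 0`), the curvature
satisfies the third-order ODE `m k‴ − 3mk k′ + k′ = 0`. -/
theorem curvature_third_order_ode (a b m : ℝ) (hm : m ≠ 0) (k l₄ l₅ : ℝ → ℝ)
    (hk : ∀ t ∈ Ioo a b, HasDerivAt k (-(2 * l₄ t) / m) t)
    (hl₄ : ∀ t ∈ Ioo a b, HasDerivAt l₄ (l₅ t + (1 / 2) * k t * (1 - m * k t)) t)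
    (hl₅ : ∀ t ∈ Ioo a b, HasDerivAt l₅ (k t * l₄ t) t) :
    ∀ t ∈ Ioo a b,
      m * deriv (deriv (deriv k)) t - 3 * m * k t * deriv k t + deriv k t = 0 := by
  intro t ht
  -- Each formula holds on the open interval, hence near `t`, so it can be differentiated again.
  have d1 : ∀ s ∈ Ioo a b, deriv k s = -(2 * l₄ s) / m := fun s hs => (hk s hs).deriv
  have d2 : ∀ s ∈ Ioo a b,
      deriv (deriv k) s = -(2 * (l₅ s + (1 / 2) * k s * (1 - m * k s))) / m := by
    intro s hs
    have e : deriv k =ᶠ[nhds s] fun u => -(2 * l₄ u) / m :=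
      Filter.eventuallyEq_of_mem (isOpen_Ioo.mem_nhds hs) d1
    rw [e.deriv_eq]
    exact (((hl₄ s hs).const_mul 2).neg.div_const m).deriv
  have e : deriv (deriv k) =ᶠ[nhds t]
      fun u => -(2 * (l₅ u + (1 / 2) * k u * (1 - m * k u))) / m :=
    Filter.eventuallyEq_of_mem (isOpen_Ioo.mem_nhds ht) d2
  have h := ((((hl₅ t ht).add (((hk t ht).const_mul (1 / 2)).mul
    (((hk t ht).const_mul m).const_sub 1))).const_mul 2).neg.div_const m).deriv
  have d3 := e.deriv_eq.trans h
  rw [d3, d1 t ht]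
  field_simp
  ring
end

section
/- If (k,λ₄,λ₅):(a,b)→ℝ³ is a differentiable solution of the Euler–Lagrange system k′ = −2λ₄/m, λ₄′ = λ₅ + ½k(1−mk), λ₅′ = kλ₄ (m ≠ 0), with constant Casimir values C₁, C₂, then the function h := ¼(k − 1/(3m)) satisfies the Weierstrass-form equation (h′)² = 4h³ − g₂ h − g₃ on (a,b), where g₂ = (1/m²)(C₂ + 1/3) and g₃ = −(1/m³)(mC₁/4 + C₂/6 + 1/27). In particular, k is expressible in terms of Weierstrass elliptic functions with invariants g₂, g₃. -/
open Set

/-- Along a differentiable solution of the Euler–Lagrange system with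
constant Casimir values `C₁`, `C₂`, the function `h := ¼(k − 1/(3m))` satisfies the
Weierstrass-form equation `(h′)² = 4h³ − g₂h − g₃` with invariants
`g₂ = (1/m²)(C₂ + 1/3)` and `g₃ = −(1/m³)(mC₁/4 + C₂/6 + 1/27)`. -/
theorem curvature_weierstrass_form (a b m : ℝ) (hm : m ≠ 0) (k l₄ l₅ : ℝ → ℝ)
    (hk : ∀ t ∈ Ioo a b, HasDerivAt k (-(2 * l₄ t) / m) t)
    (hl₄ : ∀ t ∈ Ioo a b, HasDerivAt l₄ (l₅ t + (1 / 2) * k t * (1 - m * k t)) t)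
    (hl₅ : ∀ t ∈ Ioo a b, HasDerivAt l₅ (k t * l₄ t) t)
    (C₁ C₂ : ℝ)
    (hC₁ : ∀ t ∈ Ioo a b, (l₄ t) ^ 2 - l₅ t * (1 - m * k t) = C₁)
    (hC₂ : ∀ t ∈ Ioo a b, m * l₅ t - (1 / 4) * (1 - m ^ 2 * (k t) ^ 2) = C₂) :
    ∀ t ∈ Ioo a b,
      let h : ℝ → ℝ := fun s => (1 / 4) * (k s - 1 / (3 * m))
      let g₂ : ℝ := (1 / m ^ 2) * (C₂ + 1 / 3)
      let g₃ : ℝ := -(1 / m ^ 3) * (m * C₁ / 4 + C₂ / 6 + 1 / 27)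
      (deriv h t) ^ 2 = 4 * (h t) ^ 3 - g₂ * h t - g₃ := by
  intro t ht h g₂ g₃
  have hd : deriv h t = (1 / 4) * (-(2 * l₄ t) / m) :=
    (((hk t ht).sub_const (1 / (3 * m))).const_mul (1 / 4)).deriv
  -- After substituting `h' = -l₄ / (2m)` and the Casimir values, both sides are rational
  -- functions of `m`, `k`, `l₄`, `l₅`, and they agree identically.
  rw [hd]
  simp only [h, g₂, g₃, ← hC₁ t ht, ← hC₂ t ht]
  field_simp
  ring
end

section
/- Integral curves through the bifurcation set have constant curvature: if (k,λ₄,λ₅):(a,b)→ℝ³ is a differentiable solution of the Euler–Lagrange system k′ = −2λ₄/m, λ₄′ = λ₅ + ½k(1−mk), λ₅′ = kλ₄ (m ≠ 0), and at some t₀ ∈ (a,b) one has λ₄(t₀) = 0 and λ₅(t₀) + ½k(t₀)(1 − m k(t₀)) = 0, then k, λ₄ and λ₅ are constant on (a,b). -/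
open Set

/-!
Write `u = k - k t₀`, `w = l₅ - l₅ t₀`. Since the point at `t₀` is an equilibrium, the triple
`(u, l₄, w)` solves the homogeneous *linear* system
`u' = -2 l₄ / m`, `l₄' = w + c(t) u`, `w' = k(t) l₄`, with the continuous coefficient
`c = 1/2 - (m/2) (k + k t₀)`, and it vanishes at `t₀`. On compact subintervals the coefficients are
bounded, so the system is Lipschitz (`lipschitz_linearSystem`) and the triple vanishes by
uniqueness of solutions (Grönwall).
-/

/-- The right-hand side of `u' = p y`, `y' = w + c u`, `w' = q y` in the unknowns `(u, y, w)` is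
Lipschitz with a constant controlled by the coefficients. -/
lemma lipschitz_linearSystem (p c q : ℝ) (K : NNReal) (hK : |p| + (1 + |c|) + |q| ≤ K) :
    LipschitzWith K (fun x : ℝ × ℝ × ℝ => (p * x.2.1, x.2.2 + c * x.1, q * x.2.1)) := by
  refine LipschitzWith.of_dist_le_mul fun x y => ?_
  obtain ⟨x₁, x₂, x₃⟩ := x
  obtain ⟨y₁, y₂, y₃⟩ := y
  set D := dist (x₁, x₂, x₃) (y₁, y₂, y₃) with hD
  have h1 : |x₁ - y₁| ≤ D := by simp [hD, Prod.dist_eq, Real.dist_eq]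
  have h2 : |x₂ - y₂| ≤ D := by simp [hD, Prod.dist_eq, Real.dist_eq]
  have h3 : |x₃ - y₃| ≤ D := by simp [hD, Prod.dist_eq, Real.dist_eq]
  have hD0 : 0 ≤ D := dist_nonneg
  have hKD := mul_le_mul_of_nonneg_right hK hD0
  have hp := mul_nonneg (abs_nonneg p) hD0
  have hc := mul_nonneg (abs_nonneg c) hD0
  have hq := mul_nonneg (abs_nonneg q) hD0
  have hp2 := mul_le_mul_of_nonneg_left h2 (abs_nonneg p)
  have hc1 := mul_le_mul_of_nonneg_left h1 (abs_nonneg c)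
  have hq2 := mul_le_mul_of_nonneg_left h2 (abs_nonneg q)
  simp only [Prod.dist_eq, Real.dist_eq]
  refine max_le ?_ (max_le ?_ ?_)
  · rw [← mul_sub, abs_mul]
    linarith
  · have e : x₃ + c * x₁ - (y₃ + c * y₁) = (x₃ - y₃) + c * (x₁ - y₁) := by ring
    have := abs_add_le (x₃ - y₃) (c * (x₁ - y₁))
    rw [abs_mul] at this
    rw [e]
    linarith
  · rw [← mul_sub, abs_mul]
    linarith

/-- If a differentiable solution of the Euler–Lagrange system passes
through the bifurcation set (i.e. at some `t₀ ∈ (a,b)` one has `λ₄ = 0` and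
`λ₅ + ½k(1−mk) = 0`), then `k`, `λ₄` and `λ₅` are constant on `(a,b)`. -/
theorem constant_through_bifurcation (a b m : ℝ) (hm : m ≠ 0) (k l₄ l₅ : ℝ → ℝ)
    (hk : ∀ t ∈ Ioo a b, HasDerivAt k (-(2 * l₄ t) / m) t)
    (hl₄ : ∀ t ∈ Ioo a b, HasDerivAt l₄ (l₅ t + (1 / 2) * k t * (1 - m * k t)) t)
    (hl₅ : ∀ t ∈ Ioo a b, HasDerivAt l₅ (k t * l₄ t) t)
    (t₀ : ℝ) (ht₀ : t₀ ∈ Ioo a b)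
    (h₄ : l₄ t₀ = 0)
    (h₅ : l₅ t₀ + (1 / 2) * k t₀ * (1 - m * k t₀) = 0) :
    ∀ t ∈ Ioo a b, k t = k t₀ ∧ l₄ t = l₄ t₀ ∧ l₅ t = l₅ t₀ := by
  intro t ht
  -- a compact subinterval containing both `t₀` and `t` in its interior
  obtain ⟨a', ha', ha''⟩ := exists_between (lt_min ht₀.1 ht.1)
  obtain ⟨b', hb', hb''⟩ := exists_between (max_lt ht₀.2 ht.2)
  have hsub : Icc a' b' ⊆ Ioo a b := fun s hs => ⟨ha'.trans_le hs.1, hs.2.trans_lt hb''⟩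
  have ht₀' : t₀ ∈ Ioo a' b' :=
    ⟨ha''.trans_le (min_le_left _ _), (le_max_left _ _).trans_lt hb'⟩
  have ht' : t ∈ Ioo a' b' :=
    ⟨ha''.trans_le (min_le_right _ _), (le_max_right _ _).trans_lt hb'⟩
  have hkc : ContinuousOn k (Icc a' b') := HasDerivAt.continuousOn fun s hs => hk s (hsub hs)
  have hcont : ContinuousOn
      (fun s => |-(2 / m)| + (1 + |1 / 2 - m / 2 * (k s + k t₀)|) + |k s|) (Icc a' b') := by
    fun_prop
  obtain ⟨K, hK⟩ := isCompact_Icc.bddAbove_image hcont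
  have key := ODE_solution_unique_of_mem_Ioo (a := a') (b := b') (t₀ := t₀) (K := K.toNNReal)
    (v := fun s (x : ℝ × ℝ × ℝ) => (-(2 / m) * x.2.1,
      x.2.2 + (1 / 2 - m / 2 * (k s + k t₀)) * x.1, k s * x.2.1))
    (s := fun _ => univ)
    (f := fun s => (k s - k t₀, l₄ s, l₅ s - l₅ t₀)) (g := fun _ => (0, 0, 0))
    (fun s hs => (lipschitz_linearSystem _ _ _ _
      ((hK (mem_image_of_mem _ (Ioo_subset_Icc_self hs))).trans
        (Real.le_coe_toNNReal K))).lipschitzOnWith)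
    ht₀'
    (fun s hs => by
      have hs' := hsub (Ioo_subset_Icc_self hs)
      refine ⟨?_, mem_univ _⟩
      refine (((hk s hs').sub_const (k t₀)).prodMk
        ((hl₄ s hs').prodMk ((hl₅ s hs').sub_const (l₅ t₀)))).congr_deriv ?_
      refine Prod.ext ?_ (Prod.ext ?_ rfl)
      · change -(2 * l₄ s) / m = -(2 / m) * l₄ s
        ring
      · change l₅ s + 1 / 2 * k s * (1 - m * k s)
          = l₅ s - l₅ t₀ + (1 / 2 - m / 2 * (k s + k t₀)) * (k s - k t₀)
        -- subtracting the equilibrium equation at `t₀` factors out `k s - k t₀`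
        linear_combination h₅)
    (fun s _ => ⟨(hasDerivAt_const s ((0, 0, 0) : ℝ × ℝ × ℝ)).congr_deriv (by simp; rfl),
      mem_univ _⟩)
    (by simp [h₄])
  have h := key ht'
  simp only [Prod.mk.injEq] at h
  exact ⟨sub_eq_zero.mp h.1, h.2.1.trans h₄.symm, sub_eq_zero.mp h.2.2⟩
end

section
/- Coisotropy of the Poincaré variational problem for isotropic curves: fix m ≠ 0 and (k,λ₄,λ₅) ∈ ℝ³ with not both λ₄ = 0 and λ₅ + ½k(1−mk) = 0. Then the space of vectors (Z¹,Z²,Z³,X¹,X²,X³,Y¹,Y²,Y³) ∈ ℝ⁹ satisfying the six linear equations (m/2)Z¹ = −½(1−mk)Y¹ − λ₄Y², Z² = ½(1−mk)Y³ + λ₅Y², Z³ = λ₄Y³ − λ₅Y¹, −½(1−mk)X¹ + λ₅X³ − mY³ + ½(1+mk)Y² = 0, −λ₄X¹ − λ₅X² − (m/2)Z¹ − ½(1+mk)Y¹ = 0, and −½(1−mk)X² − λ₄X³ + mY¹ = 0 is a linear subspace of ℝ⁹ of dimension exactly 3. -/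
open Set

/-!
The six equations are the vanishing of a linear map `ℝ⁹ → ℝ⁶` (`orthogonalityMap`), so by
rank-nullity it suffices that this map is surjective at regular points. Write `r = λ₅ + ½k(1-mk)`.
Since `m ≠ 0`, the first, second and third equations can be solved for `Z¹, Z², Z³`, the fourth
for `Y³` and the sixth for `Y¹`. After these eliminations, with `X¹ = X³ = 0`, the left-hand side
of the fifth is `λ₄ Y² - r X²` up to constants, and this takes every real value exactly because
`(λ₄, r) ≠ (0, 0)`.
-/

/-- The linear map whose components are the six equations (left side minus right side), in
order; its kernel is the space of vectors orthogonal to the infinitesimal generators. -/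
noncomputable def orthogonalityMap (m k l₄ l₅ : ℝ) :
    ((Fin 3 → ℝ) × (Fin 3 → ℝ) × (Fin 3 → ℝ)) →ₗ[ℝ] (Fin 6 → ℝ) where
  toFun v :=
    ![(m / 2) * v.1 0 - (-(1 / 2) * (1 - m * k) * v.2.2 0 - l₄ * v.2.2 1),
      v.1 1 - ((1 / 2) * (1 - m * k) * v.2.2 2 + l₅ * v.2.2 1),
      v.1 2 - (l₄ * v.2.2 2 - l₅ * v.2.2 0),
      -(1 / 2) * (1 - m * k) * v.2.1 0 + l₅ * v.2.1 2 - m * v.2.2 2 +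
        (1 / 2) * (1 + m * k) * v.2.2 1,
      -(l₄ * v.2.1 0) - l₅ * v.2.1 1 - (m / 2) * v.1 0 - (1 / 2) * (1 + m * k) * v.2.2 0,
      -(1 / 2) * (1 - m * k) * v.2.1 1 - l₄ * v.2.1 2 + m * v.2.2 0]
  map_add' v w := by
    ext i
    fin_cases i <;> simp <;> ring
  map_smul' c v := by
    ext i
    fin_cases i <;> simp <;> ring

theorem orthogonalityMap_surjective (m k l₄ l₅ : ℝ) (hm : m ≠ 0)
    (hreg : ¬ (l₄ = 0 ∧ l₅ + (1 / 2) * k * (1 - m * k) = 0)) :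
    Function.Surjective (orthogonalityMap m k l₄ l₅) := by
  intro c
  -- The single equation left after eliminating `Z`, `Y¹` and `Y³`.
  obtain ⟨x, y, hxy⟩ : ∃ x y : ℝ,
      l₄ * y - (l₅ + (1 / 2) * k * (1 - m * k)) * x = c 0 + c 4 + k * c 5 := by
    by_cases h : l₄ = 0
    · have hr : l₅ + (1 / 2) * k * (1 - m * k) ≠ 0 := fun hr => hreg ⟨h, hr⟩
      refine ⟨-((c 0 + c 4 + k * c 5) / (l₅ + (1 / 2) * k * (1 - m * k))), 0, ?_⟩
      rw [mul_neg, mul_div_cancel₀ _ hr]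
      ring
    · refine ⟨0, (c 0 + c 4 + k * c 5) / l₄, ?_⟩
      rw [mul_div_cancel₀ _ h]
      ring
  obtain ⟨y₀, hy₀⟩ : ∃ y₀ : ℝ, m * y₀ = c 5 + (1 / 2) * (1 - m * k) * x :=
    ⟨_, mul_div_cancel₀ _ hm⟩
  obtain ⟨y₂, hy₂⟩ : ∃ y₂ : ℝ, m * y₂ = (1 / 2) * (1 + m * k) * y - c 3 :=
    ⟨_, mul_div_cancel₀ _ hm⟩
  obtain ⟨z₀, hz₀⟩ : ∃ z₀ : ℝ, (m / 2) * z₀ = c 0 - (1 / 2) * (1 - m * k) * y₀ - l₄ * y :=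
    ⟨_, mul_div_cancel₀ _ (div_ne_zero hm two_ne_zero)⟩
  refine ⟨(![z₀, c 1 + ((1 / 2) * (1 - m * k) * y₂ + l₅ * y), c 2 + (l₄ * y₂ - l₅ * y₀)],
    ![0, x, 0], ![y₀, y, y₂]), ?_⟩
  ext i
  fin_cases i <;> simp [orthogonalityMap]
  · linear_combination hz₀
  · linear_combination -hy₂
  · linear_combination -hz₀ + hxy - k * hy₀
  · linear_combination hy₀

/-- **coisotropy.** For `m ≠ 0` and a regular point `(k, λ₄, λ₅)` (not both
`λ₄ = 0` and `λ₅ + ½k(1−mk) = 0`), the solution set of the six linear equations expressing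
orthogonality, with respect to the canonical 2-form, to the infinitesimal generators of the
`E(2,1)`-action is a linear subspace of `ℝ⁹ = ℝ³ × ℝ³ × ℝ³` of dimension exactly 3. -/
theorem coisotropy_dimension (m k l₄ l₅ : ℝ) (hm : m ≠ 0)
    (hreg : ¬ (l₄ = 0 ∧ l₅ + (1 / 2) * k * (1 - m * k) = 0)) :
    ∃ W : Submodule ℝ ((Fin 3 → ℝ) × (Fin 3 → ℝ) × (Fin 3 → ℝ)),
      (∀ Z X Y : Fin 3 → ℝ,
        (Z, X, Y) ∈ W ↔
          ((m / 2) * Z 0 = -(1 / 2) * (1 - m * k) * Y 0 - l₄ * Y 1 ∧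
           Z 1 = (1 / 2) * (1 - m * k) * Y 2 + l₅ * Y 1 ∧
           Z 2 = l₄ * Y 2 - l₅ * Y 0 ∧
           -(1 / 2) * (1 - m * k) * X 0 + l₅ * X 2 - m * Y 2 +
             (1 / 2) * (1 + m * k) * Y 1 = 0 ∧
           -(l₄ * X 0) - l₅ * X 1 - (m / 2) * Z 0 - (1 / 2) * (1 + m * k) * Y 0 = 0 ∧
           -(1 / 2) * (1 - m * k) * X 1 - l₄ * X 2 + m * Y 0 = 0)) ∧
      Module.finrank ℝ W = 3 := by
  refine ⟨LinearMap.ker (orthogonalityMap m k l₄ l₅), fun Z X Y => ?_, ?_⟩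
  · rw [LinearMap.mem_ker, funext_iff]
    simp [Fin.forall_fin_succ, orthogonalityMap, sub_eq_zero]
  · have h := LinearMap.finrank_range_add_finrank_ker (orthogonalityMap m k l₄ l₅)
    rw [LinearMap.range_eq_top.mpr (orthogonalityMap_surjective m k l₄ l₅ hm hreg), finrank_top]
      at h
    simp at h
    omega
end

section
/- Cross-section of the Marsden–Weinstein fibration, negative type: let p, v ∈ ℝ^{2,1} with C₁ := ⟨p,p⟩ < 0, p future-directed, and C₂ := ⟨p,v⟩, and let S ∈ ℝ^{2,1} satisfy ⟨S,S⟩ = 1 and ⟨p,S⟩ = 0. Define A₁ := (p − p×S)/√(2|C₁|), A₂ := S, A₃ := (p + p×S)/√(2|C₁|), and Q := (1/|C₁|) p×v. Then ⟨Aᵢ,Aⱼ⟩ = gᵢⱼ for i,j ∈ {1,2,3}, and with A the 3×3 matrix with columns A₁,A₂,A₃, m₁ := √(|C₁|/2)(e₁+e₃) and m₂ := −(C₂/√(2|C₁|))(e₁+e₃): A m₁ = p and A m₂ − (A m₁)×Q = v. -/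
/-!
Everything follows from three identities for the Lorentzian cross product: `p × S` is
Lorentz-orthogonal to `p` and `S`; `⟨p×S, p×S⟩ = ⟨p,S⟩² − ⟨p,p⟩⟨S,S⟩` (the sign is opposite to the
Euclidean Lagrange identity); and `p × (p × v) = ⟨p,p⟩ v − ⟨p,v⟩ p`. Under the hypotheses,
`p`, `S`, `p×S` are mutually orthogonal with squares `C₁`, `1`, `−C₁`, so the normalized
combinations `p ∓ p×S` are null and pair to `−1`. Since `A₁ + A₃ = 2p/√(2|C₁|)`, the matrix `A` maps
`e₁ + e₃` to a multiple of `p`, which gives `A m₁ = p` and `A m₂ = (C₂/C₁) p`; the triple product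
identity identifies `(C₂/C₁) p − p × Q` with `v`.
-/

open Set

noncomputable section

theorem lprod_comm_s17 (x y : Fin 3 → ℝ) : lprod x y = lprod y x := by
  simp only [lprod]; ring

theorem lprod_add_right (x y z : Fin 3 → ℝ) : lprod x (y + z) = lprod x y + lprod x z := by
  simp only [lprod, Pi.add_apply]; ring

theorem lprod_sub_right (x y z : Fin 3 → ℝ) : lprod x (y - z) = lprod x y - lprod x z := by
  simp only [lprod, Pi.sub_apply]; ring

theorem lprod_smul_right (c : ℝ) (x y : Fin 3 → ℝ) : lprod x (c • y) = c * lprod x y := by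
  simp only [lprod, Pi.smul_apply, smul_eq_mul]; ring

theorem lprod_add_left (x y z : Fin 3 → ℝ) : lprod (x + y) z = lprod x z + lprod y z := by
  simp only [lprod, Pi.add_apply]; ring

theorem lprod_sub_left (x y z : Fin 3 → ℝ) : lprod (x - y) z = lprod x z - lprod y z := by
  simp only [lprod, Pi.sub_apply]; ring

theorem lprod_smul_left (c : ℝ) (x y : Fin 3 → ℝ) : lprod (c • x) y = c * lprod x y := by
  simp only [lprod, Pi.smul_apply, smul_eq_mul]; ring

theorem lprod_left_lcross (x y : Fin 3 → ℝ) : lprod x (lcross x y) = 0 := by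
  simp [lprod, lcross]; ring

theorem lprod_right_lcross (x y : Fin 3 → ℝ) : lprod y (lcross x y) = 0 := by
  simp [lprod, lcross]; ring

/-- The Lagrange identity in signature `(2,1)`. -/
theorem lprod_lcross_lcross (x y : Fin 3 → ℝ) :
    lprod (lcross x y) (lcross x y) = lprod x y ^ 2 - lprod x x * lprod y y := by
  simp [lprod, lcross]; ring

theorem lcross_smul_right (c : ℝ) (x y : Fin 3 → ℝ) : lcross x (c • y) = c • lcross x y := by
  ext i; fin_cases i <;> simp [lcross] <;> ring

/-- The triple product identity in signature `(2,1)`. -/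
theorem lcross_lcross_self (x y : Fin 3 → ℝ) :
    lcross x (lcross x y) = lprod x x • y - lprod x y • x := by
  ext i; fin_cases i <;> simp [lprod, lcross] <;> ring

/-- A matrix with columns `a₁, a₂, a₃` maps `c (e₁ + e₃)` to `c (a₁ + a₃)`. -/
theorem mulVec_smul_e₁_add_e₃ (a₁ a₂ a₃ : Fin 3 → ℝ) (c : ℝ) :
    (Matrix.of fun i j => ![a₁, a₂, a₃] j i : Matrix (Fin 3) (Fin 3) ℝ).mulVec
      (c • ![1, 0, 1]) = c • (a₁ + a₃) := by
  ext i
  simp [Matrix.mulVec, dotProduct, Fin.sum_univ_three]; ring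

/-- Cross-section of the Marsden–Weinstein fibration, negative type:
for `⟨p,p⟩ < 0` with `p` future-directed and a unit vector `S` Lorentz-orthogonal to `p`, the
frame `A₁ = (p − p×S)/√(2|C₁|)`, `A₂ = S`, `A₃ = (p + p×S)/√(2|C₁|)` together with
`Q = (1/|C₁|) p×v` is Lorentz-orthonormal and the coadjoint action of `(Q,A)` carries the
standard form `(√(|C₁|/2)(e₁+e₃), −(C₂/√(2|C₁|))(e₁+e₃))` to `(p,v)`. -/
theorem cross_section_negative_type (p v S : Fin 3 → ℝ)
    (hC₁ : lprod p p < 0) (hfut : futDir p)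
    (hS : lprod S S = 1) (hpS : lprod p S = 0) :
    let C₁ : ℝ := lprod p p
    let C₂ : ℝ := lprod p v
    let A₁ : Fin 3 → ℝ := (Real.sqrt (2 * |C₁|))⁻¹ • (p - lcross p S)
    let A₂ : Fin 3 → ℝ := S
    let A₃ : Fin 3 → ℝ := (Real.sqrt (2 * |C₁|))⁻¹ • (p + lcross p S)
    let Q : Fin 3 → ℝ := |C₁|⁻¹ • lcross p v
    let A : Matrix (Fin 3) (Fin 3) ℝ := Matrix.of fun i j => ![A₁, A₂, A₃] j i
    let m₁ : Fin 3 → ℝ := Real.sqrt (|C₁| / 2) • ![1, 0, 1]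
    let m₂ : Fin 3 → ℝ := -(C₂ / Real.sqrt (2 * |C₁|)) • ![1, 0, 1]
    (∀ i j, lprod (fun r => A r i) (fun r => A r j) = gram i j) ∧
    A.mulVec m₁ = p ∧
    A.mulVec m₂ - lcross (A.mulVec m₁) Q = v := by
  intro C₁ C₂ A₁ A₂ A₃ Q A m₁ m₂
  have hC : C₁ < 0 := hC₁
  have habs : |C₁| = -C₁ := abs_of_neg hC
  have hs : 0 < Real.sqrt (2 * |C₁|) := Real.sqrt_pos.2 (by rw [habs]; linarith)
  have hs2 : Real.sqrt (2 * |C₁|) ^ 2 = -2 * C₁ := by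
    rw [Real.sq_sqrt (by positivity), habs]; ring
  have hinv : (Real.sqrt (2 * |C₁|))⁻¹ * (Real.sqrt (2 * |C₁|))⁻¹ * C₁ = -1 / 2 := by
    rw [← mul_inv, ← sq, hs2]; field_simp [hC.ne]
  have hhalf : Real.sqrt (|C₁| / 2) = Real.sqrt (2 * |C₁|) / 2 := by
    rw [show |C₁| / 2 = 2 * |C₁| / 2 ^ 2 by ring, Real.sqrt_div (by positivity),
      Real.sqrt_sq (by norm_num)]
  have hpp : lprod p p = C₁ := rfl
  have hpv : lprod p v = C₂ := rfl
  have hsum : A₁ + A₃ = (2 * (Real.sqrt (2 * |C₁|))⁻¹) • p := by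
    ext i; simp [A₁, A₃]; ring
  have hAm₁ : A.mulVec m₁ = p := by
    rw [mulVec_smul_e₁_add_e₃, hsum, smul_smul, hhalf]
    rw [show Real.sqrt (2 * |C₁|) / 2 * (2 * (Real.sqrt (2 * |C₁|))⁻¹) = 1 by
      field_simp, one_smul]
  have hAm₂ : A.mulVec m₂ = (C₂ / C₁) • p := by
    rw [mulVec_smul_e₁_add_e₃, hsum, smul_smul]
    congr 1
    rw [eq_div_iff hC.ne, div_eq_mul_inv]
    linear_combination (-2 * C₂) * hinv
  refine ⟨?_, hAm₁, ?_⟩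
  · set t := (Real.sqrt (2 * |C₁|))⁻¹ with ht
    have hN : lprod (lcross p S) (lcross p S) = -C₁ := by
      rw [lprod_lcross_lcross, hpS, hS, hpp]; ring
    have hSp : lprod S p = 0 := by rw [lprod_comm_s17, hpS]
    have hNp : lprod (lcross p S) p = 0 := by rw [lprod_comm_s17, lprod_left_lcross]
    have hNS : lprod (lcross p S) S = 0 := by rw [lprod_comm_s17, lprod_right_lcross]
    have h11 : lprod A₁ A₁ = 0 := by
      simp only [A₁, lprod_smul_left, lprod_smul_right, lprod_sub_left, lprod_sub_right,
        lprod_left_lcross, hNp, hN, hpp]; ring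
    have h12 : lprod A₁ S = 0 := by
      simp only [A₁, lprod_smul_left, lprod_sub_left, hpS, hNS]; ring
    have h13 : lprod A₁ A₃ = -1 := by
      simp only [A₁, A₃, lprod_smul_left, lprod_smul_right, lprod_sub_left, lprod_add_right,
        lprod_left_lcross, hNp, hN, hpp]
      linear_combination 2 * hinv
    have h32 : lprod A₃ S = 0 := by
      simp only [A₃, lprod_smul_left, lprod_add_left, hpS, hNS]; ring
    have h33 : lprod A₃ A₃ = 0 := by
      simp only [A₃, lprod_smul_left, lprod_smul_right, lprod_add_left, lprod_add_right,
        lprod_left_lcross, hNp, hN, hpp]; ring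
    have h21 : lprod S A₁ = 0 := by rw [lprod_comm_s17, h12]
    have h31 : lprod A₃ A₁ = -1 := by rw [lprod_comm_s17, h13]
    have h23 : lprod S A₃ = 0 := by rw [lprod_comm_s17, h32]
    intro i j
    fin_cases i <;> fin_cases j
    exacts [h11, h12, h13, h21, hS, h23, h31, h32, h33]
  · rw [hAm₂, hAm₁]
    simp only [Q]
    rw [lcross_smul_right, lcross_lcross_self, hpp, hpv, habs]
    have hne := hC.ne
    ext i
    simp only [Pi.sub_apply, Pi.smul_apply, smul_eq_mul]
    field_simp
    ring
end
end
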